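/- Let T be the rank-one transformation constructed by cutting each column C_n into two subcolumns of equal width (r_n = 2) and adding no spacers above the left subcolumn (s_{n,0} = 0) and c_n ≥ 2h_n spacers above the right subcolumn (s_{n,1} = c_n), for every n. Then T is not rationally weakly mixing: there is no measurable set F with 0 < μ(F) < ∞ such that for all measurable A, B ⊆ F, (1/a_n(F)) ∑_{k=0}^{n−1} |μ(A ∩ T^k B) − μ(A)μ(B) u_k(F)| → 0 as n → ∞. -/

import Mathlib

open MeasureTheory Filter Set Pointwise

/-- A rank-one cutting-and-stacking transformation of a subset `X ⊆ ℝ` (with Lebesgue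
measure), given by columns `C n` consisting of `h n` levels (open intervals) of width `w n`,
with `pos n j` the left endpoint of the level of height `j` in column `C n`; column `C (n+1)`
is obtained from `C n` by cutting into `r n ≥ 2` subcolumns of equal width, adding `s n k`
spacers above the `k`-th subcolumn, and stacking. -/
structure RankOne where
  X : Set ℝ
  T : ℝ ≃ᵐ ℝ
  r : ℕ → ℕ
  s : ℕ → ℕ → ℕ
  h : ℕ → ℕ
  w : ℕ → ℝ
  pos : ℕ → ℕ → ℝ
  hr : ∀ n, 2 ≤ r n
  h0 : h 0 = 1
  w0 : w 0 = 1
  pos0 : pos 0 0 = 0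
  hrec : ∀ n, h (n + 1) = ∑ k ∈ Finset.range (r n), (h n + s n k)
  wrec : ∀ n, w (n + 1) = w n / (r n : ℝ)
  hX : X = ⋃ n, ⋃ j < h n, Set.Ioo (pos n j) (pos n j + w n)
  disj : ∀ n, ∀ j < h n, ∀ j' < h n, j ≠ j' →
    Disjoint (Set.Ioo (pos n j) (pos n j + w n)) (Set.Ioo (pos n j') (pos n j' + w n))
  stack : ∀ n, ∀ j < h n, ∀ k < r n,
    pos (n + 1) ((∑ i ∈ Finset.range k, (h n + s n i)) + j) = pos n j + (k : ℝ) * w (n + 1)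
  Tmap : ∀ n j, j + 1 < h n → ∀ x ∈ Set.Ioo (pos n j) (pos n j + w n),
    T x = x + (pos n (j + 1) - pos n j)
  Tbij : Set.BijOn (⇑T) X X
  Tpres : MeasurePreserving (⇑T) (volume.restrict X) (volume.restrict X)

namespace RankOne

/-- The level of height `j` in column `C n`. -/
def lvl (S : RankOne) (n j : ℕ) : Set ℝ := Set.Ioo (S.pos n j) (S.pos n j + S.w n)

/-- The measure on the space: Lebesgue measure restricted to `X`. -/
noncomputable def μ (S : RankOne) : Measure ℝ := volume.restrict S.X

/-- The intrinsic weight sequence `u n F = μ(F ∩ TⁿF) / μ(F)²`. -/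
noncomputable def u (S : RankOne) (F : Set ℝ) (n : ℕ) : ℝ :=
  (S.μ (F ∩ (⇑S.T)^[n] '' F)).toReal / (S.μ F).toReal ^ 2

/-- `a n F = ∑_{k<n} u k F`. -/
noncomputable def a (S : RankOne) (F : Set ℝ) (n : ℕ) : ℝ :=
  ∑ k ∈ Finset.range n, S.u F k

/-- `T` is normal if spacers are added above the rightmost subcolumn infinitely often. -/
def Normal (S : RankOne) : Prop := ∀ m, ∃ n, m ≤ n ∧ 0 < S.s n (S.r n - 1)

/-- `T` grows exponentially: `2 s_{n, r_n - 1} ≥ h_{n+1}` for every `n`. -/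
def ExpGrowing (S : RankOne) : Prop := ∀ n, S.h (n + 1) ≤ 2 * S.s n (S.r n - 1)

/-- `T` has a bounded number of cuts: `sup r_n < ∞`. -/
def BoundedCuts (S : RankOne) : Prop := ∃ c, ∀ n, S.r n ≤ c

/-- `H n = {0} ∪ {∑_{k≤i} (h n + s n k) : 0 ≤ i < r n - 1}`. -/
def Hset (S : RankOne) (n : ℕ) : Finset ℕ :=
  insert 0 ((Finset.range (S.r n - 1)).image fun i => ∑ k ∈ Finset.range (i + 1), (S.h n + S.s n k))

/-- The set of heights in column `C N` of the descendants of the level of height `p`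
in column `C j`: `D(J, N) = p + H j ⊕ H (j+1) ⊕ ⋯ ⊕ H (N-1)`. -/
def desc (S : RankOne) (j p : ℕ) : ℕ → Finset ℕ
  | 0 => {p}
  | N + 1 => if N < j then {p} else desc S j p N + S.Hset N

/-- `M m`: the maximal height of a descendant of the unit interval `I` in column `C m`. -/
def M (S : RankOne) (m : ℕ) : ℕ := (S.desc 0 0 m).sup id

/-- The ergodic sum `S_n(1_F)(x) = ∑_{k<n} 1_F(T^k x)`. -/
noncomputable def birkhoff (S : RankOne) (F : Set ℝ) (n : ℕ) (x : ℝ) : ℝ :=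
  ∑ k ∈ Finset.range n, Set.indicator F (fun _ => (1 : ℝ)) ((⇑S.T)^[k] x)

/-- `T` is rationally weakly mixing on `F`. -/
def RWMOn (S : RankOne) (F : Set ℝ) : Prop :=
  MeasurableSet F ∧ 0 < S.μ F ∧ S.μ F ≠ ⊤ ∧
  ∀ A B : Set ℝ, MeasurableSet A → A ⊆ F → MeasurableSet B → B ⊆ F →
    Tendsto (fun n => (S.a F n)⁻¹ *
      ∑ k ∈ Finset.range n,
        |(S.μ (A ∩ (⇑S.T)^[k] '' B)).toReal - (S.μ A).toReal * (S.μ B).toReal * S.u F k|)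
      atTop (nhds 0)

/-- `T` is rationally weakly mixing. -/
def RWM (S : RankOne) : Prop := ∃ F, S.RWMOn F

/-- `T` is rationally ergodic: some set `F` of positive finite measure satisfies a
Renyi inequality. -/
def RatErgodic (S : RankOne) : Prop :=
  ∃ (F : Set ℝ) (c : ℝ), MeasurableSet F ∧ 0 < S.μ F ∧ S.μ F ≠ ⊤ ∧
    ∀ n, ∫ x in F, (S.birkhoff F n x) ^ 2 ∂S.μ ≤ c * (∫ x in F, S.birkhoff F n x ∂S.μ) ^ 2

/-- `T` is spectrally weakly mixing: every bounded measurable eigenfunction is a.e. constant. -/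
def SpecWM (S : RankOne) : Prop :=
  ∀ (f : ℝ → ℂ) (z : ℂ), Measurable f → (∃ C, ∀ᵐ x ∂S.μ, ‖f x‖ ≤ C) →
    (∀ᵐ x ∂S.μ, f (S.T x) = z * f x) → ∃ c : ℂ, ∀ᵐ x ∂S.μ, f x = c

/-- `T` is zero-type: `μ(A ∩ TⁿA) → 0` for all `A` of finite measure. -/
def ZeroType (S : RankOne) : Prop :=
  ∀ A : Set ℝ, MeasurableSet A → S.μ A ≠ ⊤ →
    Tendsto (fun n => S.μ (A ∩ (⇑S.T)^[n] '' A)) atTop (nhds 0)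

/-- The `i`-th nonzero element of `H n` (for `i < r n - 1`): `e n i = ∑_{k ≤ i} (h n + s n k)`. -/
def e (S : RankOne) (n i : ℕ) : ℕ := ∑ k ∈ Finset.range (i + 1), (S.h n + S.s n k)

/-- `T` is steep: listing the nonzero elements of `H 0`, then `H 1`, etc., as `t 1, t 2, …`,
each successive element is at least `4` times the previous one. -/
def Steep (S : RankOne) : Prop :=
  (∀ n i, i + 2 < S.r n → 4 * S.e n i ≤ S.e n (i + 1)) ∧
  (∀ n, 4 * S.e n (S.r n - 2) ≤ S.e (n + 1) 0)

/-- `T` is almost steep. -/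
def AlmostSteep (S : RankOne) : Prop :=
  ∀ n, 3 ≤ S.r n ∧ S.s n 0 = 0 ∧ S.s n 1 = 1 ∧
    ∀ i, 2 ≤ i → i ≤ S.r n - 1 →
      4 * (∑ k ∈ Finset.range i, (S.h n + S.s n k)) ≤ ∑ k ∈ Finset.range (i + 1), (S.h n + S.s n k)

/-- `A` is a finite union of levels of `T`. -/
def FinUnionLevels (S : RankOne) (A : Set ℝ) : Prop :=
  ∃ q : Finset (ℕ × ℕ), (∀ v ∈ q, v.2 < S.h v.1) ∧ A = ⋃ v ∈ q, S.lvl v.1 v.2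

end RankOne

/-!
Let `D` be the set of heights, in a late column, of the descendants of a fixed level of height `p`
in column `C m`. For a steep transformation each nonzero element of `H m, H (m+1), …` is at least
four times the previous one, so two distinct sums of two elements of `D` differ by at least
`e m 0`, the smallest of these elements. Every return time of a subset of the level is a difference
of two elements of `D`, so `k` and `k + q` cannot both be return times when `0 < q < e m 0`.

On the other hand `T` is conservative, so a set `F` of positive measure satisfies
`μ (F ∩ T⁻ᑫ F) > 0` for some `q > 0`. Take `m` with `q < e m 0`, and let `A` be the part of
`F ∩ T⁻ᑫ F` in some level of `C m`. Then `A` and `B = Tᑫ A` are subsets of `F`, and for each `k`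
one of `μ (A ∩ Tᵏ A)` and `μ (A ∩ Tᵏ B)` vanishes. Rational weak mixing on `F` forbids this.
-/

/-- Distinct sums `a + b`, `c + d` of two elements of `D` differ by at least `g`. Equivalently,
distinct differences `a - c`, `d - b` do; sums avoid truncated subtraction. It is applied to sets of
heights of descendants, whose differences are the return times. -/
def SumsSeparated (D : Finset ℕ) (g : ℕ) : Prop :=
  ∀ a ∈ D, ∀ b ∈ D, ∀ c ∈ D, ∀ d ∈ D, a + b < c + d → a + b + g ≤ c + d

namespace SumsSeparated

variable {D H : Finset ℕ} {g g' M p : ℕ}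

lemma mono (hD : SumsSeparated D g) (hg : g' ≤ g) : SumsSeparated D g' :=
  fun a ha b hb c hc d hd hlt => (Nat.add_le_add_left hg _).trans (hD a ha b hb c hc d hd hlt)

lemma singleton (p g : ℕ) : SumsSeparated {p} g := by
  intro a ha b hb c hc d hd hlt
  rw [Finset.mem_singleton] at ha hb hc hd
  omega

lemma of_four_mul_le (hH : ∀ x ∈ H, ∀ y ∈ H, x < y → 4 * x ≤ y)
    (hg : ∀ x ∈ H, x ≠ 0 → g ≤ x) : SumsSeparated H g := by
  have of_ordered : ∀ a ∈ H, ∀ b ∈ H, ∀ c ∈ H, ∀ d ∈ H, a ≤ b → c ≤ d → a + b < c + d →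
      a + b + g ≤ c + d := by
    intro a ha b hb c hc d hd hab hcd hlt
    rcases lt_trichotomy b d with hbd | rfl | hdb
    · have := hH b hb d hd hbd
      have := hg b hb
      have := hg d hd
      omega
    · have := hH a ha c hc (by omega)
      have := hg a ha
      have := hg c hc
      omega
    · have := hH d hd b hb hdb
      omega
  intro a ha b hb c hc d hd hlt
  rcases le_total a b with hab | hba <;> rcases le_total c d with hcd | hdc
  · exact of_ordered a ha b hb c hc d hd hab hcd hlt
  · have := of_ordered a ha b hb d hd c hc hab hdc
    omega
  · have := of_ordered b hb a ha c hc d hd hba hcd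
    omega
  · have := of_ordered b hb a ha d hd c hc hba hdc
    omega

lemma add (hD : SumsSeparated D g) (hDM : D ⊆ Finset.Icc p (p + M))
    (hH : SumsSeparated H (g + 2 * M)) : SumsSeparated (D + H) g := by
  intro a' ha' b' hb' c' hc' d' hd' hlt
  obtain ⟨a, ha, x, hx, rfl⟩ := Finset.mem_add.1 ha'
  obtain ⟨b, hb, y, hy, rfl⟩ := Finset.mem_add.1 hb'
  obtain ⟨c, hc, z, hz, rfl⟩ := Finset.mem_add.1 hc'
  obtain ⟨d, hd, t, ht, rfl⟩ := Finset.mem_add.1 hd'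
  have haM := Finset.mem_Icc.1 (hDM ha)
  have hbM := Finset.mem_Icc.1 (hDM hb)
  have hcM := Finset.mem_Icc.1 (hDM hc)
  have hdM := Finset.mem_Icc.1 (hDM hd)
  rcases lt_trichotomy (x + y) (z + t) with hlt' | heq | hgt
  · have := hH x hx y hy z hz t ht hlt'
    omega
  · have := hD a ha b hb c hc d hd (by omega)
    omega
  · have := hH z hz t ht x hx y hy hgt
    omega

lemma le_of_add_mem (hD : SumsSeparated D g) {d d' k q : ℕ} (hq : q ≠ 0) (hd : d ∈ D)
    (hdk : d + k ∈ D) (hd' : d' ∈ D) (hdkq : d' + (k + q) ∈ D) : g ≤ q := by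
  have := hD (d + k) hdk d' hd' (d' + (k + q)) hdkq d hd (by omega)
  omega

end SumsSeparated

namespace RankOne

variable (S : RankOne) {m n p N j k : ℕ} {F A B A' B' : Set ℝ} {x : ℝ}

/-! ### Columns and descendants -/

/-- The height in column `C (n+1)` of the bottom of the `k`-th subcolumn of `C n`, so that
`H n` consists of these numbers for `k < r n`, and `e n i` is the one for `k = i + 1`. -/
def subcolBase (n k : ℕ) : ℕ := ∑ i ∈ Finset.range k, (S.h n + S.s n i)

lemma subcolBase_succ (n k : ℕ) :
    S.subcolBase n (k + 1) = S.subcolBase n k + (S.h n + S.s n k) :=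
  Finset.sum_range_succ _ _

lemma subcolBase_mono (n : ℕ) : Monotone (S.subcolBase n) :=
  monotone_nat_of_le_succ fun k => by rw [subcolBase_succ]; exact Nat.le_add_right _ _

lemma subcolBase_r (n : ℕ) : S.subcolBase n (S.r n) = S.h (n + 1) := (S.hrec n).symm

lemma subcolBase_add_lt (hj : j < S.h n) (hk : k < S.r n) :
    S.subcolBase n k + j < S.h (n + 1) := by
  have := S.subcolBase_succ n k
  have hmono : S.subcolBase n (k + 1) ≤ S.subcolBase n (S.r n) := S.subcolBase_mono n hk
  rw [subcolBase_r] at hmono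
  omega

lemma two_mul_h_le_h_succ (n : ℕ) : 2 * S.h n ≤ S.h (n + 1) := by
  have hmono := S.subcolBase_mono n (S.hr n)
  rw [subcolBase_r, subcolBase_succ, subcolBase_succ] at hmono
  omega

lemma lt_h (n : ℕ) : n < S.h n := by
  induction n with
  | zero => rw [S.h0]; exact Nat.one_pos
  | succ n ih => have := S.two_mul_h_le_h_succ n; omega

lemma h_le_e_zero (n : ℕ) : S.h n ≤ S.e n 0 := by
  simp [e]

lemma e_mono (n : ℕ) : Monotone (S.e n) :=
  fun _ _ hij => S.subcolBase_mono n (Nat.add_le_add_right hij 1)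

lemma mem_Hset_iff {t : ℕ} : t ∈ S.Hset n ↔ ∃ k < S.r n, S.subcolBase n k = t := by
  have hr := S.hr n
  simp only [Hset, Finset.mem_insert, Finset.mem_image, Finset.mem_range]
  constructor
  · rintro (rfl | ⟨i, hi, rfl⟩)
    · exact ⟨0, by omega, rfl⟩
    · exact ⟨i + 1, by omega, rfl⟩
  · rintro ⟨_ | i, hi, rfl⟩
    · exact Or.inl rfl
    · exact Or.inr ⟨i, by omega, rfl⟩

lemma desc_self (m p : ℕ) : S.desc m p m = {p} := by
  cases m <;> simp [desc]

lemma desc_succ (hmN : m ≤ N) (p : ℕ) : S.desc m p (N + 1) = S.desc m p N + S.Hset N := by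
  rw [desc, if_neg hmN.not_gt]

lemma lt_h_of_mem_desc (hp : p < S.h m) (hmN : m ≤ N) : ∀ d ∈ S.desc m p N, d < S.h N := by
  induction N, hmN using Nat.le_induction with
  | base =>
    intro d hd
    rw [desc_self, Finset.mem_singleton] at hd
    rwa [hd]
  | succ N hmN ih =>
    intro d hd
    rw [S.desc_succ hmN] at hd
    obtain ⟨c, hc, t, ht, rfl⟩ := Finset.mem_add.1 hd
    obtain ⟨k, hk, rfl⟩ := S.mem_Hset_iff.1 ht
    rw [add_comm]
    exact S.subcolBase_add_lt (ih c hc) hk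

/-! ### Steep transformations -/

lemma steep_of_two_cuts (hr2 : ∀ n, S.r n = 2) (hs0 : ∀ n, S.s n 0 = 0)
    (hs1 : ∀ n, 2 * S.h n ≤ S.s n 1) : S.Steep := by
  refine ⟨fun n i hi => by have := hr2 n; omega, fun n => ?_⟩
  have hh : S.h (n + 1) = S.h n + S.s n 0 + (S.h n + S.s n 1) := by
    rw [S.hrec, hr2, Finset.sum_range_succ, Finset.sum_range_one]
  have he (i : ℕ) : S.e i 0 = S.h i := by simp [e, hs0]
  have := hs0 n
  have := hs1 n
  rw [hr2, he, he]
  omega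

lemma sumsSeparated_Hset (hS : S.Steep) (n : ℕ) : SumsSeparated (S.Hset n) (S.e n 0) := by
  refine SumsSeparated.of_four_mul_le ?_ ?_
  · intro x hx y hy hxy
    obtain ⟨_ | i, hi, rfl⟩ := S.mem_Hset_iff.1 hx
    · simp [subcolBase]
    obtain ⟨j, hj, rfl⟩ := S.mem_Hset_iff.1 hy
    have hij : i + 1 < j := (S.subcolBase_mono n).reflect_lt hxy
    exact (hS.1 n i (by omega)).trans (S.subcolBase_mono n hij)
  · intro x hx hx0
    obtain ⟨_ | i, -, rfl⟩ := S.mem_Hset_iff.1 hx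
    · exact absurd rfl hx0
    · exact S.e_mono n i.zero_le

lemma exists_desc_subset_Icc (hS : S.Steep) (p : ℕ) (hmN : m ≤ N) :
    ∃ M, 3 * M + S.e m 0 ≤ S.e N 0 ∧ S.desc m p N ⊆ Finset.Icc p (p + M) := by
  induction N, hmN using Nat.le_induction with
  | base => exact ⟨0, by simp, by simp [desc_self]⟩
  | succ N hmN ih =>
    obtain ⟨M, hM, hsub⟩ := ih
    have hr := S.hr N
    have hsteep := hS.2 N
    have hfirst_le_last := S.e_mono N (S.r N - 2).zero_le
    refine ⟨M + S.e N (S.r N - 2), by omega, fun d hd => ?_⟩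
    rw [S.desc_succ hmN] at hd
    obtain ⟨c, hc, t, ht, rfl⟩ := Finset.mem_add.1 hd
    obtain ⟨k, hk, rfl⟩ := S.mem_Hset_iff.1 ht
    have hbase : S.subcolBase N k ≤ S.e N (S.r N - 2) :=
      S.subcolBase_mono N (show k ≤ S.r N - 2 + 1 by omega)
    have := Finset.mem_Icc.1 (hsub hc)
    exact Finset.mem_Icc.2 ⟨by omega, by omega⟩

lemma sumsSeparated_desc (hS : S.Steep) (p : ℕ) (hmN : m ≤ N) :
    SumsSeparated (S.desc m p N) (S.e m 0) := by
  induction N, hmN using Nat.le_induction with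
  | base =>
    rw [desc_self]
    exact SumsSeparated.singleton p _
  | succ N hmN ih =>
    obtain ⟨M, hM, hsub⟩ := S.exists_desc_subset_Icc hS p hmN
    rw [S.desc_succ hmN]
    exact ih.add hsub ((S.sumsSeparated_Hset hS N).mono (by omega))

/-! ### Geometry of the levels -/

lemma w_pos (n : ℕ) : 0 < S.w n := by
  induction n with
  | zero => rw [S.w0]; exact one_pos
  | succ n ih =>
    rw [S.wrec]
    have : (0 : ℝ) < S.r n := Nat.cast_pos.2 (two_pos.trans_le (S.hr n))
    positivity

lemma r_mul_w_succ (n : ℕ) : S.r n * S.w (n + 1) = S.w n := by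
  have : (S.r n : ℝ) ≠ 0 := Nat.cast_ne_zero.2 (two_pos.trans_le (S.hr n)).ne'
  rw [S.wrec]
  field_simp

lemma w_le_half_pow (n : ℕ) : S.w n ≤ (1 / 2) ^ n := by
  induction n with
  | zero => rw [S.w0, pow_zero]
  | succ n ih =>
    have hr : (2 : ℝ) ≤ S.r n := by exact_mod_cast S.hr n
    have := mul_le_mul_of_nonneg_right hr (S.w_pos (n + 1)).le
    rw [r_mul_w_succ] at this
    rw [pow_succ]
    linarith

lemma tendsto_w : Tendsto S.w atTop (nhds 0) :=
  squeeze_zero (fun n => (S.w_pos n).le) S.w_le_half_pow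
    (tendsto_pow_atTop_nhds_zero_of_lt_one (by norm_num) (by norm_num))

/-- The left endpoints of all levels. Every point at which a level is cut is among them, so a point
of a level outside this countable set lies in a level of each later column. -/
def endpoints : Set ℝ := range fun v : ℕ × ℕ => S.pos v.1 v.2

lemma countable_endpoints : S.endpoints.Countable := countable_range _

lemma exists_mem_lvl_succ (hj : j < S.h n) (hx : x ∈ S.lvl n j) (hxe : x ∉ S.endpoints) :
    ∃ k < S.r n, x ∈ S.lvl (n + 1) (S.subcolBase n k + j) := by
  have hw := S.w_pos (n + 1)
  have hxj : 0 ≤ (x - S.pos n j) / S.w (n + 1) := div_nonneg (sub_nonneg.2 hx.1.le) hw.le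
  set k := ⌊(x - S.pos n j) / S.w (n + 1)⌋₊ with hk_def
  have hle : k * S.w (n + 1) ≤ x - S.pos n j := (le_div_iff₀ hw).1 (Nat.floor_le hxj)
  have hlt : x - S.pos n j < (k + 1) * S.w (n + 1) := (div_lt_iff₀ hw).1 (Nat.lt_floor_add_one _)
  have hk : k < S.r n := by
    rw [hk_def, Nat.floor_lt hxj, div_lt_iff₀ hw, r_mul_w_succ]
    linarith [hx.2]
  have hpos : S.pos (n + 1) (S.subcolBase n k + j) = S.pos n j + k * S.w (n + 1) :=
    S.stack n j hj k hk
  have hne : S.pos (n + 1) (S.subcolBase n k + j) ≠ x :=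
    fun heq => hxe ⟨(n + 1, S.subcolBase n k + j), heq⟩
  refine ⟨k, hk, lt_of_le_of_ne ?_ hne, ?_⟩
  · linarith
  · linarith

lemma exists_desc_mem_lvl (hp : p < S.h m) (hx : x ∈ S.lvl m p) (hxe : x ∉ S.endpoints)
    (hmN : m ≤ N) : ∃ d ∈ S.desc m p N, x ∈ S.lvl N d := by
  induction N, hmN using Nat.le_induction with
  | base => exact ⟨p, by simp [desc_self], hx⟩
  | succ N hmN ih =>
    obtain ⟨d, hd, hxd⟩ := ih
    obtain ⟨k, hk, hxk⟩ := S.exists_mem_lvl_succ (S.lt_h_of_mem_desc hp hmN d hd) hxd hxe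
    refine ⟨d + S.subcolBase N k, ?_, by rwa [add_comm d]⟩
    rw [S.desc_succ hmN]
    exact Finset.add_mem_add hd (S.mem_Hset_iff.2 ⟨k, hk, rfl⟩)

lemma eq_of_mem_lvl {i : ℕ} (hi : i < S.h N) (hj : j < S.h N) (hxi : x ∈ S.lvl N i)
    (hxj : x ∈ S.lvl N j) : i = j := by
  by_contra hij
  exact Set.disjoint_left.1 (S.disj N i hi j hj hij) hxi hxj

lemma iterate_T_of_mem_lvl (hjk : j + k < S.h N) (hx : x ∈ S.lvl N j) :
    S.T^[k] x = x + (S.pos N (j + k) - S.pos N j) := by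
  induction k with
  | zero => simp
  | succ k ih =>
    have hmem : x + (S.pos N (j + k) - S.pos N j) ∈ S.lvl N (j + k) :=
      ⟨by linarith [hx.1], by linarith [hx.2]⟩
    rw [Function.iterate_succ_apply', ih (by omega), S.Tmap N (j + k) (by omega) _ hmem,
      ← add_assoc]
    ring

lemma preimage_iterate_T_lvl (hjk : j + k < S.h N) :
    S.T^[k] ⁻¹' S.lvl N (j + k) = S.lvl N j := by
  ext x
  refine ⟨fun hx => ?_, fun hx => ?_⟩
  · set z := S.T^[k] x - (S.pos N (j + k) - S.pos N j) with hz
    have hzmem : z ∈ S.lvl N j := ⟨by linarith [hx.1], by linarith [hx.2]⟩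
    have hTz : S.T^[k] z = S.T^[k] x := by
      rw [S.iterate_T_of_mem_lvl hjk hzmem, hz, sub_add_cancel]
    rwa [← S.T.injective.iterate k hTz]
  · rw [mem_preimage, S.iterate_T_of_mem_lvl hjk hx]
    exact ⟨by linarith [hx.1], by linarith [hx.2]⟩

/-! ### Measure of the levels and conservativity -/

instance : NullSingletonClass S.μ := inferInstanceAs (NullSingletonClass (volume.restrict S.X))

lemma measurableSet_lvl (n j : ℕ) : MeasurableSet (S.lvl n j) := measurableSet_Ioo

lemma measurableSet_X : MeasurableSet S.X := by
  rw [S.hX]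
  exact .iUnion fun n => .iUnion fun j => .iUnion fun _ => S.measurableSet_lvl n j

lemma measurePreserving_T : MeasurePreserving S.T S.μ S.μ := S.Tpres

lemma measurableSet_iterate_T_image (hA : MeasurableSet A) (k : ℕ) :
    MeasurableSet (S.T^[k] '' A) :=
  hA.image_of_measurable_injOn (S.T.measurable.iterate k) (S.T.injective.iterate k).injOn

lemma measure_iterate_T_image (hA : MeasurableSet A) (k : ℕ) : S.μ (S.T^[k] '' A) = S.μ A := by
  rw [← (S.measurePreserving_T.iterate k).measure_preimage
      (S.measurableSet_iterate_T_image hA k).nullMeasurableSet,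
    (S.T.injective.iterate k).preimage_image]

lemma measure_lvl_le (n j : ℕ) : S.μ (S.lvl n j) ≤ ENNReal.ofReal (S.w n) :=
  calc S.μ (S.lvl n j) ≤ volume (S.lvl n j) := Measure.restrict_apply_le _ _
    _ = ENNReal.ofReal (S.w n) := by rw [lvl, Real.volume_Ioo, add_sub_cancel_left]

lemma eventually_mul_w_lt (k : ℕ) {ε : ENNReal} (hε : ε ≠ 0) :
    ∀ᶠ N in atTop, k * ENNReal.ofReal (S.w N) < ε := by
  have hw : Tendsto (fun N => k * ENNReal.ofReal (S.w N)) atTop (nhds 0) := by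
    simpa using ENNReal.Tendsto.const_mul (ENNReal.tendsto_ofReal S.tendsto_w)
      (Or.inr (ENNReal.natCast_ne_top k))
  exact hw.eventually_lt_const hε.bot_lt

lemma exists_measure_inter_lvl_ne_zero (hA : S.μ A ≠ 0) :
    ∃ m, ∃ p < S.h m, S.μ (A ∩ S.lvl m p) ≠ 0 := by
  contrapose! hA
  have hnotMem : ∀ᵐ x ∂S.μ, ∀ m p, p < S.h m → x ∉ A ∩ S.lvl m p := by
    simp only [ae_all_iff]
    exact fun m p hp => measure_eq_zero_iff_ae_notMem.1 (hA m p hp)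
  refine measure_eq_zero_iff_ae_notMem.2 ?_
  filter_upwards [hnotMem, ae_restrict_mem S.measurableSet_X] with x hx hxX hxA
  simp only [S.hX, mem_iUnion] at hxX
  obtain ⟨m, p, hp, hxp⟩ := hxX
  exact hx m p hp ⟨hxA, hxp⟩

lemma measure_le_sum_desc (hp : p < S.h m) (hA : A ⊆ S.lvl m p) (hmN : m ≤ N) :
    S.μ A ≤ ∑ d ∈ S.desc m p N, S.μ (A ∩ S.lvl N d) := by
  refine le_trans (measure_mono_ae ?_) (measure_biUnion_finset_le _ _)
  filter_upwards [S.countable_endpoints.ae_notMem S.μ] with x hxe hxA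
  obtain ⟨d, hd, hxd⟩ := S.exists_desc_mem_lvl hp (hA hxA) hxe hmN
  exact mem_biUnion hd ⟨hxA, hxd⟩

lemma eventually_exists_measure_inter_lvl_ne_zero (hA : S.μ A ≠ 0) :
    ∀ᶠ N in atTop, ∃ p < S.h N, S.μ (A ∩ S.lvl N p) ≠ 0 := by
  obtain ⟨m, p, hp, hAp⟩ := S.exists_measure_inter_lvl_ne_zero hA
  filter_upwards [eventually_ge_atTop m] with N hmN
  have hsum := (hAp.bot_lt.trans_le (S.measure_le_sum_desc hp inter_subset_right hmN)).ne'
  obtain ⟨d, hd, hne⟩ := Finset.exists_ne_zero_of_sum_ne_zero hsum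
  exact ⟨d, S.lt_h_of_mem_desc hp hmN d hd,
    fun h0 => hne (measure_mono_null (inter_subset_inter_left _ inter_subset_left) h0)⟩

lemma measure_restrict_preimage_iterate_T (hj : j < S.h N) (hAm : MeasurableSet A)
    (hA : A ⊆ S.lvl N j) : S.μ.restrict (S.lvl N 0) (S.T^[j] ⁻¹' A) = S.μ A := by
  have hsub : S.T^[j] ⁻¹' A ⊆ S.lvl N 0 := by
    rw [← S.preimage_iterate_T_lvl (show 0 + j < S.h N by rwa [zero_add]), zero_add]
    exact preimage_mono hA
  rw [Measure.restrict_apply (S.T.measurable.iterate j hAm), inter_eq_left.2 hsub]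
  exact (S.measurePreserving_T.iterate j).measure_preimage hAm.nullMeasurableSet

-- Pulled back to the bottom level of a late column, the pieces of `F` in the various levels have
-- total measure larger than that level, hence two of them meet; a common point visits `F` twice.
lemma conservative : Conservative S.T S.μ where
  toQuasiMeasurePreserving := S.measurePreserving_T.quasiMeasurePreserving
  exists_mem_iterate_mem' := by
    intro F hF hF0
    obtain ⟨m, p, hp, hFp⟩ := S.exists_measure_inter_lvl_ne_zero hF0
    obtain ⟨N, hwN, hmN⟩ :=
      ((S.eventually_mul_w_lt 1 hFp).and (eventually_ge_atTop m)).exists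
    have hFN (d : ℕ) : MeasurableSet (F ∩ S.lvl m p ∩ S.lvl N d) :=
      (hF.inter (S.measurableSet_lvl m p)).inter (S.measurableSet_lvl N d)
    have hsum : S.μ.restrict (S.lvl N 0) univ < ∑ d ∈ S.desc m p N,
        S.μ.restrict (S.lvl N 0) (S.T^[d] ⁻¹' (F ∩ S.lvl m p ∩ S.lvl N d)) := by
      rw [Measure.restrict_apply_univ, Finset.sum_congr rfl fun d hd =>
        S.measure_restrict_preimage_iterate_T (S.lt_h_of_mem_desc hp hmN d hd) (hFN d)
          inter_subset_right]
      rw [Nat.cast_one, one_mul] at hwN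
      exact (S.measure_lvl_le N 0).trans_lt
        (hwN.trans_le (S.measure_le_sum_desc hp inter_subset_right hmN))
    obtain ⟨i, -, j, -, hij, x, hxi, hxj⟩ := exists_nonempty_inter_of_measure_univ_lt_sum_measure _
      (fun d _ => (S.T.measurable.iterate d (hFN d)).nullMeasurableSet) hsum
    wlog hlt : i < j generalizing i j
    · exact this j i hij.symm hxj hxi (by omega)
    refine ⟨S.T^[i] x, hxi.1.1, j - i, by omega, ?_⟩
    rw [← Function.iterate_add_apply, Nat.sub_add_cancel hlt.le]
    exact hxj.1.1

/-! ### Return times -/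

lemma add_eq_of_iterate_T_mem_lvl {i : ℕ} (hi : i < S.h N) (hj : j < S.h N) (hkj : k ≤ j)
    (hxi : x ∈ S.lvl N i) (hxj : S.T^[k] x ∈ S.lvl N j) : i + k = j := by
  have hx : x ∈ S.lvl N (j - k) := by
    rw [← S.preimage_iterate_T_lvl (k := k) (by omega), Nat.sub_add_cancel hkj]
    exact hxj
  have := S.eq_of_mem_lvl hi (by omega) hxi hx
  omega

lemma measure_bottom_levels_le (N k : ℕ) :
    S.μ (⋃ j ∈ Finset.range k, S.lvl N j) ≤ k * ENNReal.ofReal (S.w N) :=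
  calc S.μ (⋃ j ∈ Finset.range k, S.lvl N j) ≤ ∑ j ∈ Finset.range k, S.μ (S.lvl N j) :=
        measure_biUnion_finset_le _ _
    _ ≤ ∑ _j ∈ Finset.range k, ENNReal.ofReal (S.w N) :=
        Finset.sum_le_sum fun j _ => S.measure_lvl_le N j
    _ = k * ENNReal.ofReal (S.w N) := by simp

-- Outside the bottom `k` levels of `C N`, of measure at most `k * w N`, the map `T⁻ᵏ` moves points
-- down by `k` levels.
lemma eventually_exists_desc_add_mem_desc (hp : p < S.h m) (hA : A ⊆ S.lvl m p)
    (hAk : S.μ (A ∩ S.T^[k] '' A) ≠ 0) :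
    ∀ᶠ N in atTop, ∃ d ∈ S.desc m p N, d + k ∈ S.desc m p N := by
  filter_upwards [S.eventually_mul_w_lt k hAk, eventually_ge_atTop m] with N hwN hmN
  let bottom : Set ℝ := ⋃ j ∈ Finset.range k, S.lvl N j
  let exceptional : Set ℝ := S.endpoints ∪ S.T^[k] '' S.endpoints
  have hexceptional : S.μ exceptional = 0 :=
    (S.countable_endpoints.union (S.countable_endpoints.image _)).measure_zero _
  have hnot_subset : ¬ A ∩ S.T^[k] '' A ⊆ bottom ∪ exceptional := fun hsub =>
    hwN.not_ge <| calc
      S.μ (A ∩ S.T^[k] '' A) ≤ S.μ (bottom ∪ exceptional) := measure_mono hsub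
      _ ≤ S.μ bottom + S.μ exceptional := measure_union_le _ _
      _ ≤ k * ENNReal.ofReal (S.w N) := by
        rw [hexceptional, add_zero]
        exact S.measure_bottom_levels_le N k
  obtain ⟨_, ⟨hTxA, x, hxA, rfl⟩, hTx⟩ := not_subset.1 hnot_subset
  simp only [mem_union, not_or, exceptional] at hTx
  obtain ⟨hTxbottom, hTxe, hTxe'⟩ := hTx
  have hxe : x ∉ S.endpoints := fun hx => hTxe' (mem_image_of_mem _ hx)
  obtain ⟨d, hd, hxd⟩ := S.exists_desc_mem_lvl hp (hA hxA) hxe hmN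
  obtain ⟨c, hc, hTxc⟩ := S.exists_desc_mem_lvl hp (hA hTxA) hTxe hmN
  have hkc : k ≤ c := by
    by_contra! hck
    exact hTxbottom (mem_biUnion (Finset.mem_range.2 hck) hTxc)
  have hdk : d + k = c := S.add_eq_of_iterate_T_mem_lvl (S.lt_h_of_mem_desc hp hmN d hd)
    (S.lt_h_of_mem_desc hp hmN c hc) hkc hxd hTxc
  exact ⟨d, hd, hdk ▸ hc⟩

lemma e_zero_le_of_return_times (hS : S.Steep) (hp : p < S.h m) (hA : A ⊆ S.lvl m p) {q : ℕ}
    (hq : q ≠ 0) (hk : S.μ (A ∩ S.T^[k] '' A) ≠ 0)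
    (hkq : S.μ (A ∩ S.T^[k + q] '' A) ≠ 0) : S.e m 0 ≤ q := by
  obtain ⟨N, ⟨⟨d, hd, hdk⟩, d', hd', hdkq⟩, hmN⟩ :=
    ((S.eventually_exists_desc_add_mem_desc hp hA hk).and
      (S.eventually_exists_desc_add_mem_desc hp hA hkq)).and (eventually_ge_atTop m) |>.exists
  exact (S.sumsSeparated_desc hS p hmN).le_of_add_mem hq hd hdk hd' hdkq

/-! ### Rational weak mixing -/

lemma u_nonneg (F : Set ℝ) (k : ℕ) : 0 ≤ S.u F k := by
  unfold u
  positivity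

lemma a_pos (hF0 : S.μ F ≠ 0) (hF : S.μ F ≠ ⊤) (hN : 0 < N) : 0 < S.a F N := by
  have hFpos : 0 < (S.μ F).toReal := ENNReal.toReal_pos hF0 hF
  refine Finset.sum_pos' (fun k _ => S.u_nonneg F k) ⟨0, Finset.mem_range.2 hN, ?_⟩
  simp only [u, Function.iterate_zero, image_id, inter_self]
  positivity

variable {S}

lemma RWMOn.exists_measure_inter_iterate_ne_zero (hF : S.RWMOn F)
    (hAm : MeasurableSet A) (hAF : A ⊆ F) (hA : S.μ A ≠ 0)
    (hBm : MeasurableSet B) (hBF : B ⊆ F) (hB : S.μ B ≠ 0)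
    (hAm' : MeasurableSet A') (hAF' : A' ⊆ F) (hA' : S.μ A' ≠ 0)
    (hBm' : MeasurableSet B') (hBF' : B' ⊆ F) (hB' : S.μ B' ≠ 0) :
    ∃ k, S.μ (A ∩ S.T^[k] '' B) ≠ 0 ∧ S.μ (A' ∩ S.T^[k] '' B') ≠ 0 := by
  obtain ⟨-, hF0, hFtop, hlim⟩ := hF
  have toReal_pos {C : Set ℝ} (hCF : C ⊆ F) (hC : S.μ C ≠ 0) : 0 < (S.μ C).toReal :=
    ENNReal.toReal_pos hC (measure_ne_top_of_subset hCF hFtop)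
  by_contra! hzero
  set c := min ((S.μ A).toReal * (S.μ B).toReal) ((S.μ A').toReal * (S.μ B').toReal)
  have hc : 0 < c := lt_min (mul_pos (toReal_pos hAF hA) (toReal_pos hBF hB))
    (mul_pos (toReal_pos hAF' hA') (toReal_pos hBF' hB'))
  have hterm (k : ℕ) : c * S.u F k ≤
      |(S.μ (A ∩ S.T^[k] '' B)).toReal - (S.μ A).toReal * (S.μ B).toReal * S.u F k| +
      |(S.μ (A' ∩ S.T^[k] '' B')).toReal - (S.μ A').toReal * (S.μ B').toReal * S.u F k| := by
    by_cases hk : S.μ (A ∩ S.T^[k] '' B) = 0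
    · rw [hk, ENNReal.toReal_zero, zero_sub, abs_neg]
      exact (mul_le_mul_of_nonneg_right (min_le_left _ _) (S.u_nonneg F k)).trans
        ((le_abs_self _).trans (le_add_of_nonneg_right (abs_nonneg _)))
    · rw [hzero k hk, ENNReal.toReal_zero, zero_sub, abs_neg]
      exact (mul_le_mul_of_nonneg_right (min_le_right _ _) (S.u_nonneg F k)).trans
        ((le_abs_self _).trans (le_add_of_nonneg_left (abs_nonneg _)))
  have hsum := (hlim A B hAm hAF hBm hBF).add (hlim A' B' hAm' hAF' hBm' hBF')
  refine hc.not_ge (add_zero (0 : ℝ) ▸ ge_of_tendsto hsum ?_)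
  filter_upwards [eventually_gt_atTop 0] with N hN
  rw [← mul_add, ← Finset.sum_add_distrib, inv_mul_eq_div,
    le_div_iff₀ (S.a_pos hF0.ne' hFtop hN), a, Finset.mul_sum]
  exact Finset.sum_le_sum fun k _ => hterm k

end RankOne

theorem statement6_general (S : RankOne) (hS : S.Steep) : ¬ S.RWM := by
  rintro ⟨F, hF⟩
  have hFm : MeasurableSet F := hF.1
  obtain ⟨q, hq, hFq⟩ :=
    S.conservative.exists_gt_measure_inter_ne_zero hFm.nullMeasurableSet hF.2.1.ne' 0
  obtain ⟨m, ⟨p, hp, hA⟩, hqm⟩ :=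
    ((S.eventually_exists_measure_inter_lvl_ne_zero hFq).and (eventually_ge_atTop q)).exists
  set A := F ∩ S.T^[q] ⁻¹' F ∩ S.lvl m p
  have hAm : MeasurableSet A :=
    (hFm.inter (S.T.measurable.iterate q hFm)).inter (S.measurableSet_lvl m p)
  have hAF : A ⊆ F := fun x hx => hx.1.1
  have hBF : S.T^[q] '' A ⊆ F := image_subset_iff.2 fun x hx => hx.1.2
  have hB : S.μ (S.T^[q] '' A) ≠ 0 := by rwa [S.measure_iterate_T_image hAm]
  obtain ⟨k, hk, hkq⟩ := hF.exists_measure_inter_iterate_ne_zero hAm hAF hA hAm hAF hA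
    hAm hAF hA (S.measurableSet_iterate_T_image hAm q) hBF hB
  rw [← image_comp, ← Function.iterate_add] at hkq
  have heq : S.e m 0 ≤ q := S.e_zero_le_of_return_times hS hp inter_subset_right hq.ne' hk hkq
  have := S.lt_h m
  have := S.h_le_e_zero m
  omega

/-- The rank-one transformation obtained by cutting each column in half
(`r n = 2`), adding no spacers on the left subcolumn and `c_n ≥ 2 h_n` spacers on the right
subcolumn, is not rationally weakly mixing. -/
theorem statement6 (S : RankOne) (hr2 : ∀ n, S.r n = 2) (hs0 : ∀ n, S.s n 0 = 0)
    (hs1 : ∀ n, 2 * S.h n ≤ S.s n 1) :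
    ¬ S.RWM :=
  statement6_general S (S.steep_of_two_cuts hr2 hs0 hs1)
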